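/- Let S ⊆ ∧^k V* be a subspace with S° = {0} and let Λ : S → V be a linear map satisfying i_{Λ(α)} β = − i_{Λ(β)} α for all α, β ∈ S, and set L := {(Λ(α), α) : α ∈ S} ⊆ V ⊕ ∧^k V*. Then L is lagrangian (L = L⊥) if and only if both of the following hold: (dim Λ(S) = n or dim Λ(S) ≤ n − k), and Ann(Λ(S)) = ker Λ. -/

import Mathlib

/-!
Write `E = Λ(S)`, `n = dim V` and `k = m + 1`. An element `(0, α)` lies in `L^⊥` exactly when
`α ∈ Ann(E)`, and in `L` exactly when `α ∈ ker Λ`; this accounts for the second condition.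

If `dim E > n - k`, then `Ann(E) = 0` (`AnnE_eq_bot`): a nonzero form in `Ann(E)` is nonzero on `k`
vectors which are then independent modulo `E`. So for `L` lagrangian `Λ` is injective, and the skew
condition lets one extend `Λ⁻¹ : E → ∧^k V^*` to a form `Ω ∈ ∧^{k+1} V^*` with `i_{Λ(α)} Ω = α` for
all `α ∈ S` (`exists_extension`). Every `(X, i_X Ω)` is then orthogonal to `L`, hence in `L`, and
`E = V`.

Conversely `L ⊆ L^⊥` is the skew condition. If `(X, α) ∈ L^⊥` then `i_X` kills `ker Λ = Ann(E)`,
which for `dim E ≤ n - k` forces `X ∈ E` (`mem_of_AnnE_iprod_eq_zero`: `E` is the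
common kernel of `Ann(E)`). Writing `X = Λ(γ)`, the form `α - γ` lies in `Ann(E) = ker Λ`, so
`(X, α) ∈ L`.
-/

open Module Submodule

noncomputable section

/-- `∧^m V^*`, modeled as alternating `m`-linear forms on `V`. -/
abbrev Alt (V : Type*) [AddCommGroup V] [Module ℝ V] (m : ℕ) :=
  V [⋀^Fin m]→ₗ[ℝ] ℝ

/-- The interior product `i_X : ∧^{m+1} V^* → ∧^m V^*`, as a linear map in the form. -/
def iprod (V : Type*) [AddCommGroup V] [Module ℝ V] (m : ℕ) (X : V) :
    Alt V (m + 1) →ₗ[ℝ] Alt V m :=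
  AlternatingMap.curryLeftLinearMap.flip X

lemma iprod_add_left {V : Type*} [AddCommGroup V] [Module ℝ V] (m : ℕ) (X Y : V)
    (α : Alt V (m + 1)) : iprod V m (X + Y) α = iprod V m X α + iprod V m Y α := by
  simp [iprod]

lemma iprod_smul_left {V : Type*} [AddCommGroup V] [Module ℝ V] (m : ℕ) (c : ℝ) (X : V)
    (α : Alt V (m + 1)) : iprod V m (c • X) α = c • iprod V m X α := by
  simp [iprod]

/-- The `∧^m V^*`-valued pairing on `W = V ⊕ ∧^{m+1} V^*`:
`⟨(X,α),(Y,β)⟩ = i_X β + i_Y α`. -/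
def pairW (V : Type*) [AddCommGroup V] [Module ℝ V] (m : ℕ)
    (u v : V × Alt V (m + 1)) : Alt V m :=
  iprod V m u.1 v.2 + iprod V m v.1 u.2

lemma pairW_add_left {V : Type*} [AddCommGroup V] [Module ℝ V] (m : ℕ)
    (u u' v : V × Alt V (m + 1)) :
    pairW V m (u + u') v = pairW V m u v + pairW V m u' v := by
  simp only [pairW, Prod.fst_add, Prod.snd_add, iprod_add_left, map_add]
  abel

lemma pairW_smul_left {V : Type*} [AddCommGroup V] [Module ℝ V] (m : ℕ) (c : ℝ)
    (u v : V × Alt V (m + 1)) :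
    pairW V m (c • u) v = c • pairW V m u v := by
  simp only [pairW, Prod.smul_fst, Prod.smul_snd, iprod_smul_left, map_smul, smul_add]

/-- A subspace of `W = V ⊕ ∧^{m+1}V^*` is isotropic if the pairing vanishes on it. -/
def IsIsotropic (V : Type*) [AddCommGroup V] [Module ℝ V] (m : ℕ)
    (L : Submodule ℝ (V × Alt V (m + 1))) : Prop :=
  ∀ u ∈ L, ∀ v ∈ L, pairW V m u v = 0

/-- The orthogonal `L^⊥` of a subspace `L ⊆ V ⊕ ∧^{m+1}V^*` w.r.t. the pairing. -/
def perpW (V : Type*) [AddCommGroup V] [Module ℝ V] (m : ℕ)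
    (L : Submodule ℝ (V × Alt V (m + 1))) : Submodule ℝ (V × Alt V (m + 1)) where
  carrier := {w | ∀ l ∈ L, pairW V m w l = 0}
  add_mem' := by
    intro a b ha hb l hl
    rw [pairW_add_left, ha l hl, hb l hl, add_zero]
  zero_mem' := by
    intro l hl
    simp [pairW, iprod]
  smul_mem' := by
    intro c a ha l hl
    rw [pairW_smul_left, ha l hl, smul_zero]

/-- The annihilator `Ann(E) ⊆ ∧^{m+1} V^*` of a subspace `E ⊆ V`. -/
def AnnE (V : Type*) [AddCommGroup V] [Module ℝ V] (m : ℕ) (E : Submodule ℝ V) :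
    Submodule ℝ (Alt V (m + 1)) where
  carrier := {α | ∀ X ∈ E, iprod V m X α = 0}
  add_mem' := by
    intro a b ha hb X hX
    rw [map_add, ha X hX, hb X hX, add_zero]
  zero_mem' := by intro X hX; simp
  smul_mem' := by
    intro c a ha X hX
    rw [map_smul, ha X hX, smul_zero]

/-- The annihilator `S° ⊆ V` of a subspace `S ⊆ ∧^{m+1} V^*`. -/
def polarS (V : Type*) [AddCommGroup V] [Module ℝ V] (m : ℕ)
    (S : Submodule ℝ (Alt V (m + 1))) : Submodule ℝ V where
  carrier := {X | ∀ α ∈ S, iprod V m X α = 0}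
  add_mem' := by
    intro a b ha hb α hα
    show iprod V m (a + b) α = 0
    rw [iprod_add_left, ha α hα, hb α hα, add_zero]
  zero_mem' := by
    intro α hα
    show iprod V m 0 α = 0
    simp [iprod]
  smul_mem' := by
    intro c a ha α hα
    show iprod V m (c • a) α = 0
    rw [iprod_smul_left, ha α hα, smul_zero]

/-- The `B`-field transform `e^B (X, α) = (X, α + i_X B)`. -/
def eB (V : Type*) [AddCommGroup V] [Module ℝ V] (m : ℕ) (B : Alt V (m + 2)) :
    (V × Alt V (m + 1)) →ₗ[ℝ] (V × Alt V (m + 1)) :=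
  LinearMap.prod (LinearMap.fst ℝ V (Alt V (m + 1)))
    (LinearMap.snd ℝ V (Alt V (m + 1)) + B.curryLeft.comp (LinearMap.fst ℝ V (Alt V (m + 1))))

/-- The projection `pr₁(L) ⊆ V` of a subspace `L ⊆ V ⊕ ∧^{m+1}V^*`. -/
def pr1 (V : Type*) [AddCommGroup V] [Module ℝ V] (m : ℕ)
    (L : Submodule ℝ (V × Alt V (m + 1))) : Submodule ℝ V :=
  Submodule.map (LinearMap.fst ℝ V (Alt V (m + 1))) L

/-- The projection `pr₂(L) ⊆ ∧^{m+1}V^*` of a subspace `L ⊆ V ⊕ ∧^{m+1}V^*`. -/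
def pr2S (V : Type*) [AddCommGroup V] [Module ℝ V] (m : ℕ)
    (L : Submodule ℝ (V × Alt V (m + 1))) : Submodule ℝ (Alt V (m + 1)) :=
  Submodule.map (LinearMap.snd ℝ V (Alt V (m + 1))) L

/-- `L ∩ V`, viewed as a subspace of `V` (identifying `V` with `V ⊕ 0`). -/
def capV (V : Type*) [AddCommGroup V] [Module ℝ V] (m : ℕ)
    (L : Submodule ℝ (V × Alt V (m + 1))) : Submodule ℝ V :=
  Submodule.comap (LinearMap.inl ℝ V (Alt V (m + 1))) L

/-- `L ∩ ∧^{m+1}V^*`, viewed as a subspace of `∧^{m+1}V^*`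
(identifying `∧^{m+1}V^*` with `0 ⊕ ∧^{m+1}V^*`). -/
def capF (V : Type*) [AddCommGroup V] [Module ℝ V] (m : ℕ)
    (L : Submodule ℝ (V × Alt V (m + 1))) : Submodule ℝ (Alt V (m + 1)) :=
  Submodule.comap (LinearMap.inr ℝ V (Alt V (m + 1))) L

/-- The graph `gr(ω) = {(X, i_X ω) : X ∈ V}` of `ω ∈ ∧^{m+2}V^*`. -/
def grOmega (V : Type*) [AddCommGroup V] [Module ℝ V] (m : ℕ) (ω : Alt V (m + 2)) :
    Submodule ℝ (V × Alt V (m + 1)) :=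
  LinearMap.range (LinearMap.prod LinearMap.id ω.curryLeft)

/-- `L` is weakly lagrangian if it is isotropic and `L ∩ V = pr₂(L)°`. -/
def IsWeaklyLagrangian (V : Type*) [AddCommGroup V] [Module ℝ V] (m : ℕ)
    (L : Submodule ℝ (V × Alt V (m + 1))) : Prop :=
  IsIsotropic V m L ∧ capV V m L = polarS V m (pr2S V m L)

section Lagrangian

variable {V : Type*} [AddCommGroup V] [Module ℝ V]

lemma iprod_apply (m : ℕ) (X : V) (α : Alt V (m + 1)) (v : Fin m → V) :
    iprod V m X α v = α (Matrix.vecCons X v) := rfl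

lemma iprod_iprod_comm (m : ℕ) (X Y : V) (Ω : Alt V (m + 2)) :
    iprod V m X (iprod V (m + 1) Y Ω) = - iprod V m Y (iprod V (m + 1) X Ω) := by
  ext v
  have h := Ω.map_swap (Matrix.vecCons X (Matrix.vecCons Y v)) (i := 0) (j := 1) (by simp)
  simp only [iprod_apply, AlternatingMap.neg_apply]
  rw [← h]
  congr 1
  ext i
  refine Fin.cases ?_ (fun i => Fin.cases ?_ (fun i => ?_) i) i
  · simp
  · simp
  · simp [Equiv.swap_apply_of_ne_of_ne, Fin.ext_iff]

/-- A form in `Ann(E)` vanishes as soon as any of its arguments, not only the first, is in `E`. -/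
lemma AnnE_apply_eq_zero (m : ℕ) (E : Submodule ℝ V) (α : Alt V (m + 1)) (hα : α ∈ AnnE V m E)
    (v : Fin (m + 1) → V) (j : Fin (m + 1)) (hv : v j ∈ E) : α v = 0 := by
  have key : ∀ w : Fin (m + 1) → V, w 0 ∈ E → α w = 0 := by
    intro w hw
    have h := DFunLike.congr_fun (hα (w 0) hw) (Matrix.vecTail w)
    rw [iprod_apply] at h
    have hw' : Matrix.vecCons (w 0) (Matrix.vecTail w) = w := Matrix.cons_head_tail w
    rwa [hw'] at h
  by_cases hj : j = 0
  · subst hj; exact key v hv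
  · have h := α.map_swap v (i := 0) (j := j) (Ne.symm hj)
    rw [key _ (by simpa using hv)] at h
    simpa using h.symm

lemma AnnE_eq_bot [FiniteDimensional ℝ V] (m : ℕ) (E : Submodule ℝ V)
    (hE : finrank ℝ V < finrank ℝ E + (m + 1)) : AnnE V m E = ⊥ := by
  rw [eq_bot_iff]
  intro α hα
  rw [Submodule.mem_bot]
  by_contra hne
  obtain ⟨v, hv⟩ : ∃ v, α v ≠ 0 := by
    by_contra! h
    exact hne (by ext v; simpa using h v)
  have hli : LinearIndependent ℝ (fun i => E.mkQ (v i)) := by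
    rw [Fintype.linearIndependent_iff]
    intro c hc j
    have hmem : ∑ i, c i • v i ∈ E := by
      rw [← Submodule.Quotient.mk_eq_zero, ← Submodule.mkQ_apply]
      simpa using hc
    have h0 := AnnE_apply_eq_zero m E α hα (Function.update v j (∑ i, c i • v i)) j (by simpa)
    rw [AlternatingMap.map_update_sum, Finset.sum_eq_single j] at h0
    · simpa [hv] using h0
    · intro i _ hij
      simp [AlternatingMap.map_update_smul, α.map_update_self v hij.symm]
    · simp
  have h1 := hli.fintype_card_le_finrank
  have h2 := E.finrank_quotient_add_finrank
  simp at h1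
  omega

lemma exists_linearIndependent_zero_eq {Q : Type*} [AddCommGroup Q] [Module ℝ Q]
    [FiniteDimensional ℝ Q] (x : Q) (hx : x ≠ 0) (m : ℕ) (hm : m + 1 ≤ finrank ℝ Q) :
    ∃ v : Fin (m + 1) → Q, LinearIndependent ℝ v ∧ v 0 = x := by
  induction m with
  | zero => exact ⟨fun _ => x, (linearIndependent_unique_iff (ι := Fin 1)).2 hx, rfl⟩
  | succ m ih =>
    obtain ⟨v, hv, h0⟩ := ih (by omega)
    obtain ⟨y, hy⟩ := exists_linearIndependent_snoc_of_lt_finrank hv (by omega)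
    refine ⟨_, hy, ?_⟩
    rw [← h0]
    exact Fin.snoc_castSucc (α := fun _ => Q) y v 0

/-- If `dim E ≤ n - k`, a vector killed by `Ann(E)` lies in `E`. -/
lemma mem_of_AnnE_iprod_eq_zero [FiniteDimensional ℝ V] (m : ℕ) (E : Submodule ℝ V)
    (hE : finrank ℝ E + (m + 1) ≤ finrank ℝ V) (X : V)
    (hX : ∀ β ∈ AnnE V m E, iprod V m X β = 0) : X ∈ E := by
  by_contra hXE
  have hq := E.finrank_quotient_add_finrank
  obtain ⟨v, hv, hv0⟩ := exists_linearIndependent_zero_eq (E.mkQ X)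
    (by simpa using hXE) m (by omega)
  have hinj : LinearMap.ker (Fintype.linearCombination ℝ v) = ⊥ :=
    LinearMap.ker_eq_bot.2 hv.fintypeLinearCombination_injective
  obtain ⟨g, hg⟩ := LinearMap.exists_leftInverse_of_injective _ hinj
  -- the determinant of the coordinates of `V / E` along `v`
  let β : Alt V (m + 1) := (Pi.basisFun ℝ (Fin (m + 1))).det.compLinearMap (g ∘ₗ E.mkQ)
  have hβ : β ∈ AnnE V m E := by
    intro Y hY
    ext w
    rw [iprod_apply]
    change (Pi.basisFun ℝ (Fin (m + 1))).det
      (fun i => (g ∘ₗ E.mkQ) (Matrix.vecCons Y w i)) = 0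
    refine AlternatingMap.map_coord_zero _ 0 ?_
    simp [(Submodule.Quotient.mk_eq_zero E).2 hY]
  choose w hw using fun i => E.mkQ_surjective (v i)
  have h0 := DFunLike.congr_fun (hX β hβ) (Matrix.vecTail w)
  have hgv : ∀ i, g (v i) = Pi.basisFun ℝ (Fin (m + 1)) i := by
    intro i
    have := LinearMap.congr_fun hg (Pi.single i 1)
    simpa [Fintype.linearCombination_apply_single] using this
  have h1 : (fun i => (g ∘ₗ E.mkQ) (Matrix.vecCons X (Matrix.vecTail w) i))
      = Pi.basisFun ℝ (Fin (m + 1)) := by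
    funext i
    rw [← hgv, LinearMap.comp_apply]
    congr 1
    refine Fin.cases ?_ (fun i => ?_) i
    · simp [hv0]
    · simp only [Matrix.cons_val_succ]; exact hw i.succ
  rw [iprod_apply] at h0
  change (Pi.basisFun ℝ (Fin (m + 1))).det
    (fun i => (g ∘ₗ E.mkQ) (Matrix.vecCons X (Matrix.vecTail w) i)) = 0 at h0
  rw [h1, Basis.det_self] at h0
  exact one_ne_zero h0

/-- The wedge product `φ ∧ τ` of a `1`-form and an `(m+1)`-form. -/
def wedgeOne (m : ℕ) (φ : V →ₗ[ℝ] ℝ) (τ : Alt V (m + 1)) : Alt V (m + 2) :=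
  AlternatingMap.alternatizeUncurryFin (φ.smulRight τ)

/-- `i_Y (φ ∧ τ) = φ(Y) τ - φ ∧ i_Y τ`, in the case `i_Y τ = 0`. -/
lemma iprod_wedgeOne (m : ℕ) (φ : V →ₗ[ℝ] ℝ) (τ : Alt V (m + 1)) (Y : V)
    (hY : iprod V m Y τ = 0) : iprod V (m + 1) Y (wedgeOne m φ τ) = φ Y • τ := by
  ext v
  rw [iprod_apply, wedgeOne, AlternatingMap.alternatizeUncurryFin_apply, Fin.sum_univ_succ,
    Finset.sum_eq_zero, add_zero]
  · simp [Matrix.vecCons]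
  · intro i _
    have h := DFunLike.congr_fun hY (Fin.removeNth i v)
    rw [iprod_apply] at h
    have hcons : Fin.removeNth i.succ (Matrix.vecCons Y v)
        = Matrix.vecCons Y (Fin.removeNth i v) := by
      funext j
      refine Fin.cases ?_ (fun j => ?_) j
      · simp [Fin.removeNth]
      · simp [Fin.removeNth]
    rw [LinearMap.smulRight_apply, AlternatingMap.smul_apply, hcons, h]
    simp

/-- When `Λ` is injective, the map `Λ⁻¹ : Λ(S) → ∧^k V^*` is contraction with a single
`(k+1)`-form on `V`. -/
lemma exists_extension [FiniteDimensional ℝ V] (m : ℕ) (S : Submodule ℝ (Alt V (m + 1)))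
    (lam : S →ₗ[ℝ] V) (hinj : Function.Injective lam)
    (hskew : ∀ α β : S, iprod V m (lam α) (β : Alt V (m + 1)) =
      - iprod V m (lam β) (α : Alt V (m + 1))) :
    ∃ Ω : Alt V (m + 2), ∀ α : S, iprod V (m + 1) (lam α) Ω = α := by
  classical
  -- For fixed `Ω` the condition is linear in `α`, so it propagates from a set to its span.
  have hspan : ∀ (s : Set S) (Ω : Alt V (m + 2)),
      (∀ α ∈ s, iprod V (m + 1) (lam α) Ω = α) →
      ∀ α ∈ span ℝ s, iprod V (m + 1) (lam α) Ω = α := by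
    intro s Ω h α hα
    induction hα using Submodule.span_induction with
    | mem x hx => exact h x hx
    | zero => simp [iprod]
    | add x y _ _ hx hy => rw [map_add, iprod_add_left, hx, hy]; rfl
    | smul c x _ hx => rw [map_smul, iprod_smul_left, hx]; rfl
  have hfin : ∀ s : Finset S, ∃ Ω : Alt V (m + 2),
      ∀ α ∈ s, iprod V (m + 1) (lam α) Ω = α := by
    intro s
    induction s using Finset.induction_on with
    | empty => exact ⟨0, by simp⟩
    | insert a s _ ih =>
      obtain ⟨Ω, hΩ⟩ := ih
      by_cases ha : a ∈ span ℝ (s : Set S)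
      · refine ⟨Ω, fun α hα => ?_⟩
        rcases Finset.mem_insert.1 hα with rfl | hα
        · exact hspan s Ω hΩ _ ha
        · exact hΩ α hα
      · have hna : lam a ∉ (span ℝ (s : Set S)).map lam := by
          rintro ⟨b, hb, hba⟩
          exact ha (hinj hba ▸ hb)
        obtain ⟨φ, hφa, hφ⟩ := Submodule.exists_le_ker_of_notMem hna
        -- The defect `τ` of `Ω` at `a` is killed by all vectors treated so far and by `Λ(a)`,
        -- so adding a multiple of `φ ∧ τ` corrects `Ω` at `a` without disturbing it on `s`.
        set τ : Alt V (m + 1) := a - iprod V (m + 1) (lam a) Ω with hτ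
        have hτs : ∀ b ∈ s, iprod V m (lam b) τ = 0 := by
          intro b hb
          rw [hτ, map_sub, hskew, iprod_iprod_comm, hΩ b hb, sub_self]
        have hself : ∀ α : Alt V (m + 1), ∀ X, iprod V m X α = - iprod V m X α →
            iprod V m X α = 0 := by
          intro α X h
          ext v
          have hv := DFunLike.congr_fun h v
          rw [AlternatingMap.neg_apply] at hv
          rw [AlternatingMap.zero_apply]
          linarith
        have hτa : iprod V m (lam a) τ = 0 := by
          rw [hτ, map_sub, hself _ _ (hskew a a), hself _ _ (iprod_iprod_comm m _ _ Ω), sub_self]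
        refine ⟨Ω + (φ (lam a))⁻¹ • wedgeOne m φ τ, fun α hα => ?_⟩
        rw [map_add, map_smul]
        rcases Finset.mem_insert.1 hα with rfl | hα
        · rw [iprod_wedgeOne m φ τ _ hτa, inv_smul_smul₀ hφa, hτ]
          abel
        · have h0 : φ (lam α) = 0 := hφ ⟨α, subset_span hα, rfl⟩
          rw [iprod_wedgeOne m φ τ _ (hτs α hα), h0, hΩ α hα]
          simp
  have : FiniteDimensional ℝ S := FiniteDimensional.of_injective lam hinj
  obtain ⟨s, hs⟩ := (Module.finite_def.1 this : (⊤ : Submodule ℝ S).FG)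
  obtain ⟨Ω, hΩ⟩ := hfin s
  exact ⟨Ω, fun α => hspan s Ω hΩ α (by rw [hs]; trivial)⟩

end Lagrangian

/-- For `S ⊆ ∧^k V^*` with `S° = {0}` and `Λ : S → V` with
`i_{Λ(α)} β = - i_{Λ(β)} α`, the graph `L = {(Λ(α), α)}` is lagrangian iff
(`dim Λ(S) = n` or `dim Λ(S) ≤ n - k`) and `Ann(Λ(S)) = ker Λ`.
(Here the `k` of the statement is `m + 1`.) -/
theorem stmt_10 {V : Type*} [AddCommGroup V] [Module ℝ V] [FiniteDimensional ℝ V]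
    (m : ℕ) (hmn : m + 1 ≤ finrank ℝ V - 1)
    (S : Submodule ℝ (Alt V (m + 1))) (hS : polarS V m S = ⊥)
    (lam : S →ₗ[ℝ] V)
    (hskew : ∀ α β : S, iprod V m (lam α) (β : Alt V (m + 1)) =
      - iprod V m (lam β) (α : Alt V (m + 1))) :
    (LinearMap.range (LinearMap.prod lam S.subtype) =
        perpW V m (LinearMap.range (LinearMap.prod lam S.subtype))) ↔
      ((finrank ℝ (LinearMap.range lam) = finrank ℝ V ∨
          finrank ℝ (LinearMap.range lam) ≤ finrank ℝ V - (m + 1)) ∧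
        AnnE V m (LinearMap.range lam) =
          Submodule.map S.subtype (LinearMap.ker lam)) := by
  set E := LinearMap.range lam with hE
  have hperp : ∀ X (α : Alt V (m + 1)),
      (X, α) ∈ perpW V m (LinearMap.range (LinearMap.prod lam S.subtype)) ↔
        ∀ β : S, iprod V m X (β : Alt V (m + 1)) + iprod V m (lam β) α = 0 := by
    intro X α
    constructor
    · intro h β
      exact h _ ⟨β, rfl⟩
    · rintro h _ ⟨β, rfl⟩
      exact h β
  have hmem : ∀ X (α : Alt V (m + 1)),
      (X, α) ∈ LinearMap.range (LinearMap.prod lam S.subtype) ↔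
        ∃ β : S, lam β = X ∧ (β : Alt V (m + 1)) = α := by
    intro X α
    simp [LinearMap.mem_range, Prod.ext_iff]
  have hAnn : ∀ α, α ∈ AnnE V m E ↔ ∀ β : S, iprod V m (lam β) α = 0 := by
    intro α
    constructor
    · intro h β
      exact h _ ⟨β, rfl⟩
    · rintro h _ ⟨β, rfl⟩
      exact h β
  constructor
  · intro hL
    have hker : AnnE V m E = Submodule.map S.subtype (LinearMap.ker lam) := by
      ext α
      have h1 : (0, α) ∈ perpW V m (LinearMap.range (LinearMap.prod lam S.subtype)) ↔
          α ∈ AnnE V m E := by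
        rw [hperp, hAnn]
        simp [iprod]
      rw [← h1, ← hL, hmem]
      simp only [Submodule.mem_map, LinearMap.mem_ker, Submodule.subtype_apply]
    refine ⟨?_, hker⟩
    by_contra! hdim
    have hbot := AnnE_eq_bot m E (by omega)
    rw [hbot] at hker
    have hinj : Function.Injective lam := by
      intro a b hab
      have hmem' : (a : Alt V (m + 1)) + (-1 : ℝ) • (b : Alt V (m + 1)) ∈
          Submodule.map S.subtype (LinearMap.ker lam) := by
        refine ⟨a + (-1 : ℝ) • b, LinearMap.mem_ker.2 ?_, rfl⟩
        rw [map_add, map_smul, hab]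
        simp
      rw [← hker, Submodule.mem_bot] at hmem'
      ext v
      have hv := DFunLike.congr_fun hmem' v
      rw [AlternatingMap.add_apply, AlternatingMap.smul_apply, AlternatingMap.zero_apply,
        smul_eq_mul] at hv
      linarith
    obtain ⟨Ω, hΩ⟩ := exists_extension m S lam hinj hskew
    apply hdim.1
    have htop : E = ⊤ := by
      rw [eq_top_iff]
      intro X _
      have hX : (X, iprod V (m + 1) X Ω) ∈
          perpW V m (LinearMap.range (LinearMap.prod lam S.subtype)) := by
        rw [hperp]
        intro β
        rw [iprod_iprod_comm, hΩ, add_neg_cancel]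
      rw [← hL, hmem] at hX
      obtain ⟨β, hβ, -⟩ := hX
      exact ⟨β, hβ⟩
    rw [htop, finrank_top]
  · rintro ⟨hdim, hker⟩
    ext ⟨X, α⟩
    rw [hmem, hperp]
    constructor
    · rintro ⟨γ, rfl, rfl⟩ β
      rw [hskew, neg_add_cancel]
    · intro h
      have hXE : X ∈ E := by
        rcases hdim with hdim | hdim
        · rw [Submodule.eq_top_of_finrank_eq hdim]
          trivial
        · refine mem_of_AnnE_iprod_eq_zero m E (by omega) X fun β hβ => ?_
          rw [hker] at hβ
          obtain ⟨β, hβ, rfl⟩ := hβ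
          have h0 := h β
          rw [LinearMap.mem_ker.1 hβ] at h0
          simpa [iprod] using h0
      obtain ⟨γ, rfl⟩ := hXE
      have hd : α - γ ∈ AnnE V m E := by
        rw [hAnn]
        intro β
        have h0 := h β
        rw [hskew] at h0
        rw [map_sub, sub_eq_add_neg, add_comm, h0]
      rw [hker] at hd
      obtain ⟨δ, hδ, hδα⟩ := hd
      refine ⟨γ + δ, by rw [map_add, LinearMap.mem_ker.1 hδ, add_zero], ?_⟩
      rw [Submodule.subtype_apply] at hδα
      rw [Submodule.coe_add, hδα]
      abel

end
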